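/- Let 0 < β < 1. Let A and B be finite sequences of real numbers such that B is a suffix of A and (1 - β)·f(A) ≤ f(B). Then for every finite sequence C of real numbers, (1 - 1/(2 - β))·f(A ++ C) ≤ f(B ++ C). In other words, the maximum subarray sum is (1/(2-β), β)-smooth. -/

import Mathlib

/-- Maximum subarray sum of a finite sequence: the maximum of 0 and all sums of
contiguous subsequences (the empty infix, of sum 0, is among the infixes). -/
noncomputable def msum (W : List ℝ) : ℝ :=
  ((W.inits.flatMap List.tails).map List.sum).foldr max 0

/-- Maximum prefix sum: the maximum of 0 and all prefix sums. -/
noncomputable def presum (W : List ℝ) : ℝ :=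
  (W.inits.map List.sum).foldr max 0

/-- Maximum suffix sum: the maximum of 0 and all suffix sums. -/
noncomputable def sufsum (W : List ℝ) : ℝ :=
  (W.tails.map List.sum).foldr max 0

/-!
Each infix of `A ++ C` lies in `A`, lies in `C`, or joins a suffix of `A` to a prefix of `C`, so the
maximum subarray sum `f` is subadditive under concatenation. Since `f B` and `f C` are both at most
`f (B ++ C)`, the bound `(1 - β) * f A ≤ f B` gives
`(1 - β) * f (A ++ C) ≤ f B + (1 - β) * f C ≤ (2 - β) * f (B ++ C)`.
-/

theorem foldr_max_le_iff {α : Type*} [LinearOrder α] {l : List α} {a x : α} :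
    l.foldr max a ≤ x ↔ a ≤ x ∧ ∀ y ∈ l, y ≤ x := by
  induction l with
  | nil => simp
  | cons b l ih =>
    rw [List.foldr_cons, max_le_iff, ih, List.forall_mem_cons, and_left_comm]

theorem mem_flatMap_tails_inits {α : Type*} {S W : List α} :
    S ∈ W.inits.flatMap List.tails ↔ S <:+: W := by
  simp only [List.mem_flatMap, List.mem_inits, List.mem_tails, List.infix_iff_suffix_prefix,
    and_comm]

theorem msum_le_iff {W : List ℝ} {x : ℝ} : msum W ≤ x ↔ ∀ S, S <:+: W → S.sum ≤ x := by
  rw [msum, foldr_max_le_iff, List.forall_mem_map]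
  simp only [mem_flatMap_tails_inits]
  refine and_iff_right_of_imp fun h => ?_
  simpa only [List.sum_nil] using h [] List.nil_infix

theorem sum_le_msum {S W : List ℝ} (h : S <:+: W) : S.sum ≤ msum W :=
  msum_le_iff.mp le_rfl S h

theorem msum_le_msum_of_isInfix {V W : List ℝ} (h : V <:+: W) : msum V ≤ msum W :=
  msum_le_iff.mpr fun _ hS => sum_le_msum (hS.trans h)

theorem msum_nonneg (W : List ℝ) : 0 ≤ msum W :=
  sum_le_msum List.nil_infix

theorem msum_append_le (A C : List ℝ) : msum (A ++ C) ≤ msum A + msum C := by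
  refine msum_le_iff.mpr fun S hS => ?_
  rcases List.infix_append_iff.mp hS with hSA | hSC | ⟨T, U, rfl, hTA, hUC⟩
  · exact le_add_of_le_of_nonneg (sum_le_msum hSA) (msum_nonneg C)
  · exact le_add_of_nonneg_of_le (msum_nonneg A) (sum_le_msum hSC)
  · rw [List.sum_append]
    exact add_le_add (sum_le_msum hTA.isInfix) (sum_le_msum hUC.isInfix)

theorem msum_smooth_general {β : ℝ} (hβ : β ≤ 1) {A B : List ℝ}
    (hAB : (1 - β) * msum A ≤ msum B) (C : List ℝ) :
    (1 - 1 / (2 - β)) * msum (A ++ C) ≤ msum (B ++ C) := by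
  have h_nonneg : 0 ≤ 1 - β := sub_nonneg.mpr hβ
  have h_denom_pos : 0 < 2 - β := by linarith
  have h_coeff : 1 - 1 / (2 - β) = (1 - β) / (2 - β) := by
    field_simp
    ring
  rw [h_coeff, div_mul_eq_mul_div, div_le_iff₀' h_denom_pos]
  calc (1 - β) * msum (A ++ C)
    _ ≤ (1 - β) * (msum A + msum C) := mul_le_mul_of_nonneg_left (msum_append_le A C) h_nonneg
    _ = (1 - β) * msum A + (1 - β) * msum C := mul_add _ _ _
    _ ≤ msum (B ++ C) + (1 - β) * msum (B ++ C) := by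
      gcongr
      · exact hAB.trans (msum_le_msum_of_isInfix List.infix_append_left)
      · exact msum_le_msum_of_isInfix List.infix_append_right
    _ = (2 - β) * msum (B ++ C) := by ring

/-- The maximum subarray sum is (1/(2-β), β)-smooth. -/
theorem msum_smooth (β : ℝ) (hβ0 : 0 < β) (hβ1 : β < 1)
    (A B : List ℝ) (hBA : B <:+ A) (hfB : (1 - β) * msum A ≤ msum B) :
    ∀ C : List ℝ, (1 - 1 / (2 - β)) * msum (A ++ C) ≤ msum (B ++ C) :=
  msum_smooth_general hβ1.le hfB
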